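/- For all integers n > n′ ≥ 1, a single object O of type 𝒯_{n,n′} with initial value s solves wait-free binary consensus among n processes: in the algorithm where each process with input x ∈ {0,1} applies op_x to O and decides the value returned, every crash-free execution satisfies agreement, validity, and wait-freedom (each process decides after one step). -/

import Mathlib

namespace RecoverableConsensus

/-- A deterministic object type: a set of values, operations and responses together with a
transition function assigning to each (value, operation) pair a unique response and a unique
resulting value. -/
structure DetType : Type 1 where
  Value : Type
  Op : Type
  Resp : Type
  δ : Value → Op → Resp × Value

/-- A type is readable if it has a Read operation that returns (an injective encoding of)
the current value of the object without changing it. -/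
def Readable (T : DetType) : Prop :=
  ∃ (read : T.Op) (ι : T.Value → T.Resp),
    Function.Injective ι ∧ ∀ v, T.δ v read = (ι v, v)

/-- The register type over the value set `V`: the operation `none` is Read (returning the
current value without changing it) and `some v` is Write(v) (changing the value to `v`). -/
def RegisterType (V : Type) : DetType where
  Value := V
  Op := Option V
  Resp := V
  δ := fun u op =>
    match op with
    | none => (u, u)
    | some v => (v, v)

def IsRegister (T : DetType) : Prop := ∃ V : Type, T = RegisterType V

/-- An event is either a step by a process or a crash of a process. -/
inductive Event (n : ℕ) : Type where
  | step : Fin n → Event n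
  | crash : Fin n → Event n
deriving DecidableEq

/-- An algorithm for `n` processes: a collection of shared objects, each with a deterministic
type and an initial value, and for each process a deterministic state machine with an initial
state depending on the process's binary input.  Each state determines the process's next step
(`pending`: an operation applied to a designated object, or `none` for a no-op); the state
reached after a step is determined by the current state and the response received (`next`).
`output i s = some v` means that `s` is an output state of process `i` for the value `v`;
processes in output states take only no-op steps. -/
structure Algorithm (n : ℕ) : Type 1 where
  ObjIdx : Type
  objType : ObjIdx → DetType
  objInit : (o : ObjIdx) → (objType o).Value
  PState : Fin n → Type
  init : (i : Fin n) → Bool → PState i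
  pending : (i : Fin n) → PState i → Option ((o : ObjIdx) × (objType o).Op)
  next : (i : Fin n) → PState i → (o : ObjIdx) → (objType o).Resp → PState i
  output : (i : Fin n) → PState i → Option Bool
  output_noop : ∀ i s, output i s ≠ none → pending i s = none

/-- A configuration assigns a state to each process and a value to each object. -/
structure Config {n : ℕ} (A : Algorithm n) : Type where
  pstate : (i : Fin n) → A.PState i
  oval : (o : A.ObjIdx) → (A.objType o).Value

variable {n : ℕ}

/-- The effect of one event on a configuration.  A crash of `p_i` resets `p_i` to its initial
state (for its input) and leaves all object values unchanged; a step of `p_i` applies its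
pending operation (if any) to the designated object, receiving the response determined by the
type's transition function. -/
noncomputable def applyEvent (A : Algorithm n) (input : Fin n → Bool) (C : Config A) :
    Event n → Config A
  | .crash i => { C with pstate := Function.update C.pstate i (A.init i (input i)) }
  | .step i =>
    letI : DecidableEq A.ObjIdx := Classical.decEq _
    match A.pending i (C.pstate i) with
    | none => C
    | some ⟨o, op⟩ =>
      { pstate := Function.update C.pstate i
          (A.next i (C.pstate i) o ((A.objType o).δ (C.oval o) op).1),
        oval := Function.update C.oval o ((A.objType o).δ (C.oval o) op).2 }

/-- Since the algorithm is deterministic, a finite execution from `C` is determined by its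
schedule, i.e. its list of events; `run A input C σ` is the configuration `Cσ` reached by
applying the events of `σ` in order from `C`. -/
noncomputable def run (A : Algorithm n) (input : Fin n → Bool) (C : Config A) :
    List (Event n) → Config A
  | [] => C
  | e :: σ => run A input (applyEvent A input C e) σ

/-- The initial configuration: every process in its initial state, every object at its
initial value. -/
def initConfig (A : Algorithm n) (input : Fin n → Bool) : Config A :=
  ⟨fun i => A.init i (input i), A.objInit⟩

/-- Process `i` has decided `v` in `Cσ`: at some point along the execution `σ` from `C`,
process `i` was in an output state for `v`. -/
def HasDecided (A : Algorithm n) (input : Fin n → Bool) (C : Config A)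
    (σ : List (Event n)) (i : Fin n) (v : Bool) : Prop :=
  ∃ τ, τ <+: σ ∧ A.output i ((run A input C τ).pstate i) = some v

def CrashFree (σ : List (Event n)) : Prop := ∀ i : Fin n, Event.crash i ∉ σ

/-- The first `k` events of an infinite execution. -/
def initSeg (e : ℕ → Event n) (k : ℕ) : List (Event n) := (List.range k).map e

/-- Agreement: in every execution no two processes decide different values. -/
def Agreement (A : Algorithm n) : Prop :=
  ∀ (input : Fin n → Bool) (σ : List (Event n)) (i j : Fin n) (v w : Bool),
    HasDecided A input (initConfig A input) σ i v →
    HasDecided A input (initConfig A input) σ j w → v = w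

/-- Validity: every decided value is the input of some process. -/
def Validity (A : Algorithm n) : Prop :=
  ∀ (input : Fin n → Bool) (σ : List (Event n)) (i : Fin n) (v : Bool),
    HasDecided A input (initConfig A input) σ i v → ∃ j, input j = v

/-- Recoverable wait-freedom: every process, starting from its initial state, either crashes
or decides within a finite number of its own steps.  Equivalently: in every infinite execution
in which process `i` starts at (or is reset by a crash to) its initial state, takes infinitely
many steps and crashes only finitely often, it eventually reaches an output state. -/
def RecWaitFree (A : Algorithm n) : Prop :=
  ∀ (input : Fin n → Bool) (C : Config A) (e : ℕ → Event n) (i : Fin n),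
    (C.pstate i = A.init i (input i) ∨ ∃ k, e k = Event.crash i) →
    (∀ m, ∃ k, m ≤ k ∧ e k = Event.step i) →
    (∃ m, ∀ k, m ≤ k → e k ≠ Event.crash i) →
    ∃ (k : ℕ) (v : Bool), A.output i ((run A input C (initSeg e k)).pstate i) = some v

/-- A recoverable wait-free binary consensus algorithm. -/
def SolvesRecConsensus (A : Algorithm n) : Prop :=
  Agreement A ∧ Validity A ∧ RecWaitFree A

/-- Agreement restricted to crash-free executions. -/
def AgreementCF (A : Algorithm n) : Prop :=
  ∀ (input : Fin n → Bool) (σ : List (Event n)), CrashFree σ →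
    ∀ (i j : Fin n) (v w : Bool),
      HasDecided A input (initConfig A input) σ i v →
      HasDecided A input (initConfig A input) σ j w → v = w

/-- Validity restricted to crash-free executions. -/
def ValidityCF (A : Algorithm n) : Prop :=
  ∀ (input : Fin n → Bool) (σ : List (Event n)), CrashFree σ →
    ∀ (i : Fin n) (v : Bool),
      HasDecided A input (initConfig A input) σ i v → ∃ j, input j = v

/-- Wait-freedom: in crash-free executions, every process that takes infinitely many steps
decides. -/
def WaitFree (A : Algorithm n) : Prop :=
  ∀ (input : Fin n → Bool) (e : ℕ → Event n),
    (∀ (k : ℕ) (i : Fin n), e k ≠ Event.crash i) →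
    ∀ i : Fin n, (∀ m, ∃ k, m ≤ k ∧ e k = Event.step i) →
    ∃ (k : ℕ) (v : Bool),
      A.output i ((run A input (initConfig A input) (initSeg e k)).pstate i) = some v

/-- A wait-free binary consensus algorithm (for the model in which crashes are permanent,
i.e. only crash-free executions are relevant). -/
def SolvesWFConsensus (A : Algorithm n) : Prop :=
  AgreementCF A ∧ ValidityCF A ∧ WaitFree A

/-- The number of crashes of process `i` in `σ`. -/
def crashCount (i : Fin n) (σ : List (Event n)) : ℕ :=
  (σ.filter fun e => decide (e = Event.crash i)).length

def isStepBelow (i : Fin n) : Event n → Bool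
  | .step j => decide (j < i)
  | .crash _ => false

/-- The total number of steps taken by processes `p_0, …, p_{i-1}` in `σ`. -/
def stepsBelow (i : Fin n) (σ : List (Event n)) : ℕ := (σ.filter (isStepBelow i)).length

/-- The crash bound: for every process `p_i`, the number of crashes of `p_i` is at most
`z·n` times the total number of steps of `p_0, …, p_{i-1}` (for `i = 0` this says that `p_0`
never crashes). -/
def EMem (z : ℕ) (σ : List (Event n)) : Prop :=
  ∀ i : Fin n, crashCount i σ ≤ z * n * stepsBelow i σ

/-- `𝓔_z`: executions satisfying the crash bound. -/
def ESet (n z : ℕ) : Set (List (Event n)) := { σ | EMem z σ }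

/-- `𝓔*_z`: executions satisfying the crash bound in every prefix. -/
def EStarSet (n z : ℕ) : Set (List (Event n)) := { σ | ∀ τ, τ <+: σ → EMem z τ }

/-- `e` is an event by a process in `P`. -/
def eventBy (P : Set (Fin n)) : Event n → Prop
  | .step i => i ∈ P
  | .crash i => i ∈ P

/-- The set of processes `P` is `v`-univalent in the execution `α` from `C` with respect to
the set of executions `𝒜`. -/
def VUnivalentIn (A : Algorithm n) (input : Fin n → Bool) (C : Config A)
    (𝒜 : Set (List (Event n))) (P : Set (Fin n)) (α : List (Event n)) (v : Bool) : Prop :=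
  α ∈ 𝒜 ∧ ∀ β : List (Event n), (∀ e ∈ β, eventBy P e) → (α ++ β) ∈ 𝒜 →
    ∀ (i : Fin n) (w : Bool), HasDecided A input C (α ++ β) i w → w = v

/-- The set of processes `P` is bivalent in the execution `α` from `C` with respect to `𝒜`. -/
def BivalentIn (A : Algorithm n) (input : Fin n → Bool) (C : Config A)
    (𝒜 : Set (List (Event n))) (P : Set (Fin n)) (α : List (Event n)) : Prop :=
  ∀ v : Bool, ∃ β : List (Event n), (∀ e ∈ β, eventBy P e) ∧ (α ++ β) ∈ 𝒜 ∧
    ∃ i : Fin n, HasDecided A input C (α ++ β) i v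

/-- `P` is univalent in `α` with respect to `𝒜`: `v`-univalent for some `v`. -/
def UnivalentIn (A : Algorithm n) (input : Fin n → Bool) (C : Config A)
    (𝒜 : Set (List (Event n))) (P : Set (Fin n)) (α : List (Event n)) : Prop :=
  ∃ v : Bool, VUnivalentIn A input C 𝒜 P α v

/-- `α ∈ 𝒜` is critical with respect to `𝒜`: `α` is bivalent with respect to `𝒜` and every
nonempty extension of `α` inside `𝒜` is univalent with respect to `𝒜`. -/
def Critical (A : Algorithm n) (input : Fin n → Bool) (C : Config A)
    (𝒜 : Set (List (Event n))) (α : List (Event n)) : Prop :=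
  α ∈ 𝒜 ∧ BivalentIn A input C 𝒜 Set.univ α ∧
  ∀ β : List (Event n), β ≠ [] → (α ++ β) ∈ 𝒜 → UnivalentIn A input C 𝒜 Set.univ (α ++ β)

/-- Process `i` is on team `v` in `Cα` (with respect to `𝒜`): `α p_i` is `v`-univalent. -/
def OnTeam (A : Algorithm n) (input : Fin n → Bool) (C : Config A)
    (𝒜 : Set (List (Event n))) (α : List (Event n)) (i : Fin n) (v : Bool) : Prop :=
  VUnivalentIn A input C 𝒜 Set.univ (α ++ [Event.step i]) v

/-- Process `i` is poised to apply an operation to object `O` in configuration `C`. -/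
def PoisedAt (A : Algorithm n) (C : Config A) (i : Fin n) (O : A.ObjIdx) : Prop :=
  ∃ op, A.pending i (C.pstate i) = some ⟨O, op⟩

/-- `σ ∈ 𝒮(P)`: a crash-free schedule in which each process of `P` takes at most one step
and no other process takes a step. -/
def IsSched (P : Set (Fin n)) (σ : List (Event n)) : Prop :=
  ∃ l : List (Fin n), l.Nodup ∧ (∀ j ∈ l, j ∈ P) ∧ σ = l.map Event.step

/-- The schedule `λ_k = c_k c_{k+1} ⋯ c_{n-1}`. -/
def lambdaSched (n k : ℕ) : List (Event n) :=
  ((List.finRange n).filter fun j => decide (k ≤ j.val)).map Event.crash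

/-- `U_v`: the set of values of object `O` reachable from `Dα` by a schedule in `𝒮(𝒫)`
whose first process is on team `v`. -/
def USetCfg (A : Algorithm n) (input : Fin n → Bool) (D : Config A)
    (𝒜 : Set (List (Event n))) (α : List (Event n)) (O : A.ObjIdx) (v : Bool) :
    Set (A.objType O).Value :=
  { w | ∃ (j : Fin n) (σ : List (Event n)), OnTeam A input D 𝒜 α j v ∧
        IsSched {k : Fin n | k ≠ j} σ ∧
        w = (run A input D (α ++ Event.step j :: σ)).oval O }

/-- The configuration `Dα` is `v`-hiding. -/
def VHiding (A : Algorithm n) (input : Fin n → Bool) (D : Config A)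
    (𝒜 : Set (List (Event n))) (α : List (Event n)) (O : A.ObjIdx) (v : Bool) : Prop :=
  USetCfg A input D 𝒜 α O false ∩ USetCfg A input D 𝒜 α O true = ∅ ∧
  (run A input D α).oval O ∈ USetCfg A input D 𝒜 α O v

/-- The configuration `Dα` is `n`-recording. -/
def NRecordingCfg (A : Algorithm n) (input : Fin n → Bool) (D : Config A)
    (𝒜 : Set (List (Event n))) (α : List (Event n)) (O : A.ObjIdx) : Prop :=
  USetCfg A input D 𝒜 α O false ∩ USetCfg A input D 𝒜 α O true = ∅ ∧
  ∀ v : Bool, (run A input D α).oval O ∈ USetCfg A input D 𝒜 α O v →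
    ∃! j : Fin n, OnTeam A input D 𝒜 α j (!v)

/-- Apply the operations `o i` of the processes listed in `σ`, in order, to an object of type
`T`, starting from the value `u`. -/
def applyOps (T : DetType) (o : Fin n → T.Op) : T.Value → List (Fin n) → T.Value
  | u, [] => u
  | u, i :: σ => applyOps T o (T.δ u (o i)).2 σ

/-- `U_x`: the set of values obtainable by applying the operations of the processes of a
duplicate-free schedule whose first process is on team `x` to an object with initial value
`u`. -/
def UVals (T : DetType) (o : Fin n → T.Op) (u : T.Value) (team : Fin n → Bool) (x : Bool) :
    Set T.Value :=
  { v | ∃ (i : Fin n) (σ : List (Fin n)), team i = x ∧ (i :: σ).Nodup ∧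
        v = applyOps T o u (i :: σ) }

/-- A deterministic type `T` is `n`-recording. -/
def NRecording (n : ℕ) (T : DetType) : Prop :=
  ∃ (u : T.Value) (team : Fin n → Bool) (o : Fin n → T.Op),
    (∀ x : Bool, ∃ i, team i = x) ∧
    (UVals T o u team false ∩ UVals T o u team true = ∅) ∧
    (∀ x : Bool, u ∈ UVals T o u team x → ∃! i, team i = !x)

end RecoverableConsensus
namespace RecoverableConsensus

/-- The values of the type `𝒯_{n,n'}`: `s`, `s_⊥`, and `s_{x,i}` for `x ∈ {0,1}` and
`i ∈ {1, …, n-1}` (here `mid x i` with `i : Fin (n-1)` represents `s_{x, i+1}`). -/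
inductive TVal (n : ℕ) : Type where
  | s : TVal n
  | bot : TVal n
  | mid : Bool → Fin (n - 1) → TVal n
deriving DecidableEq

/-- The operations of `𝒯_{n,n'}`. -/
inductive TOp : Type where
  | op0 | op1 | opR
deriving DecidableEq

/-- The responses of `𝒯_{n,n'}`: a bit, a value, or `⊥`. -/
inductive TResp (n : ℕ) : Type where
  | bit : Bool → TResp n
  | val : TVal n → TResp n
  | botR : TResp n
deriving DecidableEq

/-- The deterministic (non-readable) type `𝒯_{n,n'}` for `n > n' ≥ 1`. -/
def TType (n n' : ℕ) (hn : 2 ≤ n) : DetType where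
  Value := TVal n
  Op := TOp
  Resp := TResp n
  δ := fun v op =>
    match v, op with
    | .s, .op0 => (.bit false, .mid false ⟨0, by omega⟩)
    | .s, .op1 => (.bit true, .mid true ⟨0, by omega⟩)
    | .s, .opR => (.val .s, .s)
    | .bot, _ => (.botR, .bot)
    | .mid x i, .op0 =>
        if h : i.val + 1 < n - 1 then (.bit x, .mid x ⟨i.val + 1, h⟩) else (.bit x, .bot)
    | .mid x i, .op1 =>
        if h : i.val + 1 < n - 1 then (.bit x, .mid x ⟨i.val + 1, h⟩) else (.bit x, .bot)
    | .mid x i, .opR =>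
        if i.val + 1 ≤ n' then (.val (.mid x i), .mid x i) else (.botR, .bot)

/-- The algorithm uses only objects of type `T` together with registers. -/
def UsesTypeAndRegisters {n : ℕ} (A : Algorithm n) (T : DetType) : Prop :=
  ∀ o : A.ObjIdx, A.objType o = T ∨ IsRegister (A.objType o)

end RecoverableConsensus
namespace RecoverableConsensus

/-- Local states for the one-shot consensus algorithm: `start x` (about to apply `op_x`) and
`done v` (decided `v`). -/
inductive OSState : Type where
  | start : Bool → OSState
  | done : Bool → OSState
deriving DecidableEq

/-- The wait-free consensus algorithm for `n` processes using a single object of type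
`𝒯_{n,n'}` with initial value `s`: a process with input `x` applies `op_x` and decides the
value returned. -/
def oneShotAlg (n n' : ℕ) (hn : 2 ≤ n) : Algorithm n where
  ObjIdx := Unit
  objType _ := TType n n' hn
  objInit _ := TVal.s
  PState _ := OSState
  init _ x := .start x
  pending _ s :=
    match s with
    | .start x => some ⟨(), if x then TOp.op1 else TOp.op0⟩
    | .done _ => none
  next _ s _ r :=
    match s, r with
    | .start _, TResp.bit b => .done b
    | .start x, _ => .done x
    | .done v, _ => .done v
  output _ s :=
    match s with
    | .done v => some v
    | _ => none
  output_noop := by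
    intro i s h
    cases s with
    | start x => simp at h
    | done v => rfl

/-- Local states for the recoverable consensus algorithm: `phase0 x` (about to apply `op_R`),
`phase1 x` (saw `s`, about to apply `op_x`), `done v` (decided `v`). -/
inductive RecState : Type where
  | phase0 : Bool → RecState
  | phase1 : Bool → RecState
  | done : Bool → RecState
deriving DecidableEq

/-- The recoverable wait-free consensus algorithm for `n'` processes using a single object of
type `𝒯_{n,n'}` with initial value `s`: a process with input `x` first applies `op_R`; if the
response is `s_{v,i}` it decides `v`; if the response is `⊥` it decides `0`; otherwise (the
response is `s`) it applies `op_x` and decides the value returned. -/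
def recAlg (n n' : ℕ) (hn : 2 ≤ n) : Algorithm n' where
  ObjIdx := Unit
  objType _ := TType n n' hn
  objInit _ := TVal.s
  PState _ := RecState
  init _ x := .phase0 x
  pending _ s :=
    match s with
    | .phase0 _ => some ⟨(), TOp.opR⟩
    | .phase1 x => some ⟨(), if x then TOp.op1 else TOp.op0⟩
    | .done _ => none
  next _ s _ r :=
    match s, r with
    | .phase0 x, TResp.val TVal.s => .phase1 x
    | .phase0 _, TResp.val (TVal.mid v _) => .done v
    | .phase0 _, TResp.botR => .done false
    | .phase0 x, _ => .phase0 x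
    | .phase1 _, TResp.bit b => .done b
    | .phase1 x, _ => .phase1 x
    | .done v, _ => .done v
  output _ s :=
    match s with
    | .done v => some v
    | _ => none
  output_noop := by
    intro i s h
    cases s with
    | phase0 x => simp at h
    | phase1 x => simp at h
    | done v => rfl

end RecoverableConsensus

namespace RecoverableConsensus

/-! The first process to apply its operation fixes its own input `x` as the bit held by the object,
and the object returns `x` to each of the first `n` operations `op_0`, `op_1`. A process applies
an operation only at its first step, so in a crash-free execution at most `n` operations are
applied, and every process that has taken a step has been answered `x`. Hence the configuration
reached depends only on `x` and on the set of processes that have taken a step. -/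

section Model

variable {n : ℕ} {A : Algorithm n} {input : Fin n → Bool} {C : Config A} {i : Fin n}

lemma CrashFree.exists_eq_map_step {σ : List (Event n)} (hσ : CrashFree σ) :
    ∃ l : List (Fin n), σ = l.map Event.step := by
  have hsteps : σ ∈ Set.range (List.map (Event.step (n := n))) := by
    rw [Set.range_list_map]
    rintro (i | i) he
    · exact ⟨i, rfl⟩
    · exact absurd he (hσ i)
  exact hsteps.imp fun _ => Eq.symm

lemma applyEvent_step_of_pending_eq_none (h : A.pending i (C.pstate i) = none) :
    applyEvent A input C (.step i) = C := by
  simp only [applyEvent, h]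

lemma applyEvent_step_of_pending_eq_some [DecidableEq A.ObjIdx] {o : A.ObjIdx}
    {op : (A.objType o).Op} (h : A.pending i (C.pstate i) = some ⟨o, op⟩) :
    applyEvent A input C (.step i) =
      { pstate := Function.update C.pstate i
          (A.next i (C.pstate i) o ((A.objType o).δ (C.oval o) op).1)
        oval := Function.update C.oval o ((A.objType o).δ (C.oval o) op).2 } := by
  simp only [applyEvent, h]
  congr!

end Model

section ObjectType

variable {n : ℕ}

/-- The operation `op_x` of `𝒯_{n,n'}`. -/
def TOp.ofBit (x : Bool) : TOp := if x then .op1 else .op0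

/-- The value of an object of type `𝒯_{n,n'}`, initially `s`, after `k` operations `op_0`, `op_1`
of which the first is `op_x`. It is `s` for `k = 0`, `s_{x,k}` for `1 ≤ k < n`, and `s_⊥` for
`k ≥ n`; recall that `mid x k` encodes `s_{x,k+1}`. -/
def TVal.after (x : Bool) : ℕ → TVal n
  | 0 => .s
  | k + 1 => if h : k < n - 1 then .mid x ⟨k, h⟩ else .bot

lemma TType_δ_after (n' : ℕ) (hn : 2 ≤ n) (x y : Bool) {k : ℕ} (hk : k < n) :
    (TType n n' hn).δ (TVal.after x k) (TOp.ofBit y) =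
      (.bit (if k = 0 then y else x), TVal.after (if k = 0 then y else x) (k + 1)) := by
  cases k with
  | zero =>
    have hpos : 0 < n - 1 := by omega
    cases y <;> simp [TType, TOp.ofBit, TVal.after, hpos]
  | succ m =>
    have hm : m < n - 1 := by omega
    by_cases hlast : m + 1 < n - 1 <;> cases y <;>
      simp [TType, TOp.ofBit, TVal.after, hm, hlast]

end ObjectType

namespace oneShotAlg

variable {n n' : ℕ} {hn : 2 ≤ n} {input : Fin n → Bool} {S : Finset (Fin n)} {i : Fin n}

/-- The local states in the one-shot algorithm when exactly the processes in `S` have taken a step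
and all of them have decided `x`. -/
def localState (input : Fin n → Bool) (S : Finset (Fin n)) (x : Bool) (i : Fin n) : OSState :=
  if i ∈ S then .done x else .start (input i)

lemma update_localState (x : Bool) :
    Function.update (localState input S x) i (.done (if S = ∅ then input i else x)) =
      localState input (insert i S) (if S = ∅ then input i else x) := by
  funext j
  obtain rfl | hj := eq_or_ne j i
  · simp [localState]
  · by_cases hjS : j ∈ S
    · simp [localState, hj, hjS, Finset.ne_empty_of_mem hjS]
    · simp [localState, hj, hjS]

/-- The configuration of the one-shot algorithm in which exactly the processes in `S` have taken
a step and the first of them had input `x`. For `S = ∅` this is the initial configuration,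
whatever `x` is. -/
def config (n' : ℕ) (hn : 2 ≤ n) (input : Fin n → Bool) (S : Finset (Fin n)) (x : Bool) :
    Config (oneShotAlg n n' hn) where
  pstate := localState input S x
  oval _ := TVal.after x S.card

lemma initConfig_eq_config (x : Bool) :
    initConfig (oneShotAlg n n' hn) input = config n' hn input ∅ x := rfl

lemma output_config (S : Finset (Fin n)) (x : Bool) (i : Fin n) :
    (oneShotAlg n n' hn).output i ((config n' hn input S x).pstate i) =
      if i ∈ S then some x else none := by
  by_cases hi : i ∈ S <;> simp [config, localState, oneShotAlg, hi]

lemma applyEvent_step_config_of_mem (hi : i ∈ S) (x : Bool) :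
    applyEvent (oneShotAlg n n' hn) input (config n' hn input S x) (.step i) =
      config n' hn input S x := by
  apply applyEvent_step_of_pending_eq_none
  simp [config, localState, oneShotAlg, hi]

lemma applyEvent_step_config_of_notMem (hi : i ∉ S) (x : Bool) :
    applyEvent (oneShotAlg n n' hn) input (config n' hn input S x) (.step i) =
      config n' hn input (insert i S) (if S = ∅ then input i else x) := by
  classical
  have hstart : (config n' hn input S x).pstate i = OSState.start (input i) := if_neg hi
  have hpending : (oneShotAlg n n' hn).pending i ((config n' hn input S x).pstate i) =
      some ⟨(), TOp.ofBit (input i)⟩ := by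
    rw [hstart]
    rfl
  have hcard : S.card < n := by simpa using Finset.card_lt_univ_of_notMem hi
  have hresponse : ((oneShotAlg n n' hn).objType ()).δ ((config n' hn input S x).oval ())
      (TOp.ofBit (input i)) = (TResp.bit (if S = ∅ then input i else x),
        TVal.after (if S = ∅ then input i else x) (S.card + 1)) := by
    simp only [← Finset.card_eq_zero]
    exact TType_δ_after n' hn x (input i) hcard
  rw [applyEvent_step_of_pending_eq_some hpending, hresponse, hstart]
  refine congrArg₂ Config.mk (update_localState x) (funext fun _ => ?_)
  exact (Function.update_self ..).trans
    (congrArg (TVal.after _) (Finset.card_insert_of_notMem hi).symm)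

lemma run_map_step_config (hS : S.Nonempty) (x : Bool) (l : List (Fin n)) :
    run (oneShotAlg n n' hn) input (config n' hn input S x) (l.map .step) =
      config n' hn input (S ∪ l.toFinset) x := by
  induction l generalizing S with
  | nil => simp [run]
  | cons i l ih =>
    rw [List.map_cons, run]
    by_cases hi : i ∈ S
    · rw [applyEvent_step_config_of_mem hi, ih hS, List.toFinset_cons, Finset.union_insert,
        Finset.insert_eq_of_mem (Finset.mem_union_left _ hi)]
    · rw [applyEvent_step_config_of_notMem hi, if_neg hS.ne_empty,
        ih (Finset.insert_nonempty i S), List.toFinset_cons, Finset.union_insert,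
        Finset.insert_union]

lemma run_initConfig_map_step_cons (i : Fin n) (l : List (Fin n)) :
    run (oneShotAlg n n' hn) input (initConfig (oneShotAlg n n' hn) input)
        ((i :: l).map .step) =
      config n' hn input (i :: l).toFinset (input i) := by
  rw [initConfig_eq_config (input i), List.map_cons, run,
    applyEvent_step_config_of_notMem (Finset.notMem_empty i), if_pos rfl,
    run_map_step_config (Finset.insert_nonempty i ∅), List.toFinset_cons, Finset.insert_union,
    Finset.empty_union]

lemma exists_forall_prefix_output_eq (n' : ℕ) (hn : 2 ≤ n) (input : Fin n → Bool)
    {σ : List (Event n)} (hσ : CrashFree σ) :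
    ∃ j, ∀ τ, τ <+: σ → ∀ i,
      (oneShotAlg n n' hn).output i ((run (oneShotAlg n n' hn) input
          (initConfig (oneShotAlg n n' hn) input) τ).pstate i) =
        if .step i ∈ τ then some (input j) else none := by
  obtain ⟨_ | ⟨j, l⟩, rfl⟩ := hσ.exists_eq_map_step
  · refine ⟨⟨0, by omega⟩, fun τ hτ i => ?_⟩
    obtain rfl := List.prefix_nil.mp hτ
    rfl
  · refine ⟨j, fun τ hτ i => ?_⟩
    obtain ⟨l', hl', rfl⟩ := List.prefix_map_iff.mp hτ
    obtain rfl | ⟨k, rfl, -⟩ := List.prefix_cons_iff.mp hl'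
    · rfl
    · rw [run_initConfig_map_step_cons, output_config]
      simp

lemma exists_forall_hasDecided_eq (n' : ℕ) (hn : 2 ≤ n) (input : Fin n → Bool)
    {σ : List (Event n)} (hσ : CrashFree σ) :
    ∃ j, ∀ i v, HasDecided (oneShotAlg n n' hn) input
      (initConfig (oneShotAlg n n' hn) input) σ i v → v = input j := by
  obtain ⟨j, hj⟩ := exists_forall_prefix_output_eq n' hn input hσ
  refine ⟨j, fun i v ⟨τ, hτ, hv⟩ => ?_⟩
  rw [hj τ hτ i, Option.ite_none_right_eq_some, Option.some_inj] at hv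
  exact hv.2.symm

end oneShotAlg

end RecoverableConsensus

open RecoverableConsensus in
/-- For all integers `n > n' ≥ 1`, a single object of type `𝒯_{n,n'}` with
initial value `s` solves wait-free binary consensus among `n` processes: in the algorithm in
which each process with input `x` applies `op_x` and decides the value returned, every
crash-free execution satisfies agreement and validity, and each process has decided after
taking one step. -/
theorem oneShotAlg_solves_consensus
    (n n' : ℕ) (h1 : 1 ≤ n') (h2 : n' < n) (hn : 2 ≤ n) :
    (∀ (input : Fin n → Bool) (σ : List (Event n)), CrashFree σ →
      ∀ (i j : Fin n) (v w : Bool),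
        HasDecided (oneShotAlg n n' hn) input (initConfig (oneShotAlg n n' hn) input) σ i v →
        HasDecided (oneShotAlg n n' hn) input (initConfig (oneShotAlg n n' hn) input) σ j w →
        v = w) ∧
    (∀ (input : Fin n → Bool) (σ : List (Event n)), CrashFree σ →
      ∀ (i : Fin n) (v : Bool),
        HasDecided (oneShotAlg n n' hn) input (initConfig (oneShotAlg n n' hn) input) σ i v →
        ∃ j : Fin n, input j = v) ∧
    (∀ (input : Fin n → Bool) (σ : List (Event n)), CrashFree σ →
      ∀ i : Fin n, Event.step i ∈ σ →
        ∃ v : Bool,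
          (oneShotAlg n n' hn).output i
            ((run (oneShotAlg n n' hn) input (initConfig (oneShotAlg n n' hn) input)
              σ).pstate i) = some v) := by
  refine ⟨fun input σ hσ i j v w hv hw => ?_, fun input σ hσ i v hv => ?_,
    fun input σ hσ i hi => ?_⟩
  · obtain ⟨k, hk⟩ := oneShotAlg.exists_forall_hasDecided_eq n' hn input hσ
    exact (hk i v hv).trans (hk j w hw).symm
  · obtain ⟨k, hk⟩ := oneShotAlg.exists_forall_hasDecided_eq n' hn input hσ
    exact ⟨k, (hk i v hv).symm⟩
  · obtain ⟨k, hk⟩ := oneShotAlg.exists_forall_prefix_output_eq n' hn input hσ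
    exact ⟨input k, (hk σ List.prefix_rfl i).trans (if_pos hi)⟩
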